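/- For every function f holomorphic on 𝔻: (i) the function 𝒟(f)(z) = ∏_{j=1}^{n−1} (f(z) − f(φ_j(z))) is well defined and holomorphic on all of 𝔻; (ii) the quotient Γ(f)(z) = 𝒟(f)(z)/𝒟(z), where 𝒟(z) = ∏_{j=1}^{n−1} (z − φ_j(z)), which a priori is meromorphic with possible singularities at the points where B′ vanishes, has only removable singularities and hence extends to a holomorphic function on 𝔻; (iii) if f is bounded on 𝔻 then Γ(f) is bounded on 𝔻. -/

import Mathlib

/-!
Write `B = P / Q` with `P = ∏ (a_j - X)` and `Q = ∏ (1 - conj(a_j) X)`. The fiber through `z` is the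
root multiset of `P - B(z) Q`; since one `a_j` vanishes, `deg Q < n` and this polynomial has degree
`n` and leading coefficient `(-1)^n` for every `z`. Dividing by `X - z` gives `redPoly a z`, whose
roots are `φ_1(z), …, φ_{n-1}(z)` and whose coefficients are holomorphic in `z`. In particular
`𝒟(z) = (-1)^n (P'(z) - B(z) Q'(z))` is holomorphic (`calD_id_eq`).

The function `gammaFn a f z = ∏_{j ≥ 1} F(z, φ_j(z))`, with `F(z, w)` the divided difference of `f`,
satisfies `gammaFn · 𝒟 = 𝒟(f)` by construction, so (i) and (ii) reduce to its being holomorphic.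
When `f` is a polynomial, `F(z, ·)` is the quotient of `f` by `X - z`, and the product is, up to sign,
the resultant of `redPoly a z` with it, a polynomial in holomorphic functions of `z`
(`differentiableOn_prod_divByMonic`). In general the Taylor polynomials of `f` converge to `f`
together with their derivatives on smaller disks. By the mean value inequality so do the divided
differences, uniformly, and the fibers through a compact part of the disk stay in a compact part
(`exists_radius_fiber`, because `|B| = 1` exactly on the circle). So `gammaFn a f` is a locally
uniform limit of holomorphic functions.

For (iii): on the circle `z B'(z) / B(z)` is a sum of terms with positive real part, so
`P' - B Q' = Q B'` has no zero there and `|𝒟|` is bounded below on an annulus `ρ < |z| < 1`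
(`exists_lower_bound_calD_id`). There `|Γ(f)| = |𝒟(f)| / |𝒟|` is bounded, and on `|z| ≤ ρ`
it is bounded by compactness.
-/

open Complex Polynomial MeasureTheory Metric Set Filter Topology
open scoped Classical

noncomputable section

/-- The open unit disk in `ℂ`. -/
def uDisk : Set ℂ := Metric.ball 0 1

/-- The closed unit disk in `ℂ`. -/
def cDisk : Set ℂ := Metric.closedBall 0 1

/-- The finite Blaschke product with zero set `a 0, …, a (n-1)`:
`B(z) = ∏_j (a_j - z)/(1 - conj(a_j)·z)`. -/
def blaschke {n : ℕ} (a : Fin n → ℂ) (z : ℂ) : ℂ :=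
  ∏ j, (a j - z) / (1 - (starRingEnd ℂ) (a j) * z)

/-- The multiset of the `n` solutions (with multiplicity) `φ_0(z) = z, φ_1(z), …, φ_{n-1}(z)`
of `B(w) = B(z)`, realized as the roots of the polynomial equation
`∏_j (a_j - w) = B(z) · ∏_j (1 - conj(a_j)·w)`. -/
def fiberMS {n : ℕ} (a : Fin n → ℂ) (z : ℂ) : Multiset ℂ :=
  ((∏ j, (Polynomial.C (a j) - Polynomial.X)) -
    Polynomial.C (blaschke a z) *
      ∏ j, (1 - Polynomial.C ((starRingEnd ℂ) (a j)) * Polynomial.X)).roots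

/-- `𝒟(f)(z) = ∏_{j=1}^{n-1} (f(z) - f(φ_j(z)))`, where `φ_1(z), …, φ_{n-1}(z)` is the
fiber of `B` over `B(z)` with one copy of `z` removed.  In particular
`calD a id z = ∏_{j=1}^{n-1} (z - φ_j(z))`. -/
def calD {n : ℕ} (a : Fin n → ℂ) (f : ℂ → ℂ) (z : ℂ) : ℂ :=
  (((fiberMS a z).erase z).map (fun w => f z - f w)).prod

/-- `G` is (the holomorphic extension after removing singularities of) `Γ(f) = 𝒟(f)/𝒟`. -/
def IsGamma {n : ℕ} (a : Fin n → ℂ) (f G : ℂ → ℂ) : Prop :=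
  DifferentiableOn ℂ G uDisk ∧ ∀ z ∈ uDisk, G z * calD a id z = calD a f z

/-- `p`-th power integral mean of `f` on the circle of radius `r`. -/
def circMean (p : ℝ) (f : ℂ → ℂ) (r : ℝ) : ℝ :=
  ∫ θ in (0:ℝ)..(2 * Real.pi), ‖f ((r : ℂ) * Complex.exp ((θ : ℂ) * Complex.I))‖ ^ p

/-- The `H^p` norm of `f` (for `0 < p < ∞`). -/
def hpNorm (p : ℝ) (f : ℂ → ℂ) : ℝ :=
  (sSup {m : ℝ | ∃ r ∈ Set.Ico (0:ℝ) 1, m = circMean p f r}) ^ (1 / p)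

/-- Membership in the Hardy space `H^p`, `0 < p < ∞`: holomorphic on the disk with
uniformly bounded integral means. -/
def MemHp (p : ℝ) (f : ℂ → ℂ) : Prop :=
  DifferentiableOn ℂ f uDisk ∧ ∃ C : ℝ, ∀ r ∈ Set.Ico (0:ℝ) 1, circMean p f r ≤ C

/-- Membership in `H^∞`: bounded holomorphic functions on the disk. -/
def MemHinf (f : ℂ → ℂ) : Prop :=
  DifferentiableOn ℂ f uDisk ∧ ∃ C : ℝ, ∀ z ∈ uDisk, ‖f z‖ ≤ C

/-- The `H^∞` (sup) norm. -/
def hinfNorm (f : ℂ → ℂ) : ℝ := sSup {m : ℝ | ∃ z ∈ uDisk, m = ‖f z‖}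

/-- The algebra of all polynomials in the functions `F 0, …, F (m-1)`. -/
def algGen (m : ℕ) (F : Fin m → (ℂ → ℂ)) : Set (ℂ → ℂ) :=
  {h | ∃ P : MvPolynomial (Fin m) ℂ, ∀ z : ℂ, h z = MvPolynomial.eval (fun i => F i z) P}

/-- The algebra `ℂ[F,G]` of all polynomials in the two functions `F` and `G`. -/
def algGen2 (F G : ℂ → ℂ) : Set (ℂ → ℂ) := algGen 2 ![F, G]

/-- The (sequential) closure of `S` in `H^p`. -/
def hpClosure (p : ℝ) (S : Set (ℂ → ℂ)) : Set (ℂ → ℂ) :=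
  {f | MemHp p f ∧ ∃ u : ℕ → (ℂ → ℂ), (∀ k, u k ∈ S) ∧
    Filter.Tendsto (fun k => hpNorm p (fun z => f z - u k z)) Filter.atTop (nhds 0)}

/-- `S` has finite codimension in `H^p`: finitely many functions in `H^p` together with `S`
span all of `H^p`. -/
def FiniteCodimHp (p : ℝ) (S : Set (ℂ → ℂ)) : Prop :=
  ∃ (k : ℕ) (e : Fin k → (ℂ → ℂ)), (∀ i, MemHp p (e i)) ∧
    ∀ f, MemHp p f → ∃ (c : Fin k → ℂ) (s : ℂ → ℂ), s ∈ S ∧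
      ∀ z ∈ uDisk, f z = s z + ∑ i, c i * e i z

/-- Inner function: bounded by 1, holomorphic, radial limits of modulus 1 a.e. -/
def IsInner (f : ℂ → ℂ) : Prop :=
  DifferentiableOn ℂ f uDisk ∧ (∀ z ∈ uDisk, ‖f z‖ ≤ 1) ∧
  ∀ᵐ θ : ℝ ∂volume, ∃ l : ℂ, ‖l‖ = 1 ∧
    Filter.Tendsto (fun r : ℝ => f ((r : ℂ) * Complex.exp ((θ : ℂ) * Complex.I)))
      (nhdsWithin 1 (Set.Iio 1)) (nhds l)

/-- `J` divides `h`, with a quotient holomorphic on the disk. -/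
def InnerDivides (J h : ℂ → ℂ) : Prop :=
  ∃ k : ℂ → ℂ, DifferentiableOn ℂ k uDisk ∧ ∀ z ∈ uDisk, h z = J z * k z

/-- Outer function: a holomorphic function on the disk whose only inner divisors are
unimodular constants (i.e. whose inner part is a unimodular constant). -/
def IsOuter (h : ℂ → ℂ) : Prop :=
  DifferentiableOn ℂ h uDisk ∧
  ∀ J : ℂ → ℂ, IsInner J → InnerDivides J h →
    ∃ c : ℂ, ‖c‖ = 1 ∧ ∀ z ∈ uDisk, J z = c

/-- `I` is the inner part of `h`: `I` is inner and `h = I·F` with `F` outer. -/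
def IsInnerPartOf (I h : ℂ → ℂ) : Prop :=
  IsInner I ∧ ∃ F : ℂ → ℂ, IsOuter F ∧ ∀ z ∈ uDisk, h z = I z * F z

/-- Finite Blaschke product (up to a unimodular constant factor). -/
def IsFiniteBlaschke (f : ℂ → ℂ) : Prop :=
  ∃ (m : ℕ) (c : ℂ) (b : Fin m → ℂ), ‖c‖ = 1 ∧ (∀ i, b i ∈ uDisk) ∧
    ∀ z ∈ uDisk, f z = c * ∏ i, (b i - z) / (1 - (starRingEnd ℂ) (b i) * z)

/-- `h` has no singular inner factor: every zero-free inner divisor of `h` is a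
unimodular constant. -/
def NoSingularInnerFactor (h : ℂ → ℂ) : Prop :=
  ∀ J : ℂ → ℂ, IsInner J → (∀ z ∈ uDisk, J z ≠ 0) → InnerDivides J h →
    ∃ c : ℂ, ‖c‖ = 1 ∧ ∀ z ∈ uDisk, J z = c

/-! ### The polynomial whose roots form the fiber -/

/-- The numerator `∏_j (a_j - X)` of the Blaschke product. -/
def numP {n : ℕ} (a : Fin n → ℂ) : ℂ[X] := ∏ j, (C (a j) - X)

/-- The denominator `∏_j (1 - conj(a_j) X)` of the Blaschke product. -/
def denQ {n : ℕ} (a : Fin n → ℂ) : ℂ[X] := ∏ j, (1 - C ((starRingEnd ℂ) (a j)) * X)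

/-- The polynomial `P - B(z) Q`, whose roots are the fiber of `B` through `z`. -/
def fiberPoly {n : ℕ} (a : Fin n → ℂ) (z : ℂ) : ℂ[X] :=
  numP a - C (blaschke a z) * denQ a

/-- The fiber polynomial with the root `z` divided out; its roots are
`φ_1(z), …, φ_{n-1}(z)`. -/
def redPoly {n : ℕ} (a : Fin n → ℂ) (z : ℂ) : ℂ[X] := fiberPoly a z /ₘ (X - C z)

lemma eval_numP {n : ℕ} (a : Fin n → ℂ) (z : ℂ) : (numP a).eval z = ∏ j, (a j - z) := by
  simp [numP, eval_prod]

lemma eval_denQ {n : ℕ} (a : Fin n → ℂ) (z : ℂ) :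
    (denQ a).eval z = ∏ j, (1 - (starRingEnd ℂ) (a j) * z) := by
  simp [denQ, eval_prod]

lemma blaschke_eq {n : ℕ} (a : Fin n → ℂ) (z : ℂ) :
    blaschke a z = (numP a).eval z / (denQ a).eval z := by
  rw [eval_numP, eval_denQ, blaschke, Finset.prod_div_distrib]

lemma mem_uDisk {z : ℂ} : z ∈ uDisk ↔ ‖z‖ < 1 := by simp [uDisk]

lemma one_sub_conj_mul_ne_zero {a z : ℂ} (ha : ‖a‖ < 1) (hz : ‖z‖ ≤ 1) :
    1 - (starRingEnd ℂ) a * z ≠ 0 := by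
  intro h
  have h1 : (starRingEnd ℂ) a * z = 1 := (sub_eq_zero.mp h).symm
  have h2 : ‖a‖ * ‖z‖ = 1 := by
    have := congrArg norm h1
    simpa using this
  nlinarith [norm_nonneg a, norm_nonneg z]

lemma denQ_ne_zero {n : ℕ} {a : Fin n → ℂ} (ha : ∀ j, a j ∈ uDisk) {z : ℂ} (hz : ‖z‖ ≤ 1) :
    (denQ a).eval z ≠ 0 := by
  rw [eval_denQ]
  exact Finset.prod_ne_zero_iff.mpr fun j _ =>
    one_sub_conj_mul_ne_zero (mem_uDisk.mp (ha j)) hz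

/-- The identity `|1 - āz|² - |a - z|² = (1 - |a|²)(1 - |z|²)` behind all comparisons of the
numerator and the denominator of `B`. -/
lemma normSq_one_sub_conj_mul (a z : ℂ) :
    ‖1 - (starRingEnd ℂ) a * z‖ ^ 2 - ‖a - z‖ ^ 2 = (1 - ‖a‖ ^ 2) * (1 - ‖z‖ ^ 2) := by
  simp only [← Complex.normSq_eq_norm_sq, Complex.normSq_apply]
  simp
  ring

lemma norm_sub_lt {a z : ℂ} (ha : ‖a‖ < 1) (hz : ‖z‖ < 1) :
    ‖a - z‖ < ‖1 - (starRingEnd ℂ) a * z‖ := by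
  have h := normSq_one_sub_conj_mul a z
  have h1 : 0 < 1 - ‖a‖ ^ 2 := by nlinarith [norm_nonneg a]
  have h2 : 0 < 1 - ‖z‖ ^ 2 := by nlinarith [norm_nonneg z]
  exact lt_of_pow_lt_pow_left₀ 2 (norm_nonneg _) (by nlinarith [mul_pos h1 h2])

lemma norm_le_sub {a z : ℂ} (ha : ‖a‖ < 1) (hz : 1 ≤ ‖z‖) :
    ‖1 - (starRingEnd ℂ) a * z‖ ≤ ‖a - z‖ := by
  have h := normSq_one_sub_conj_mul a z
  have h1 : 0 < 1 - ‖a‖ ^ 2 := by nlinarith [norm_nonneg a]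
  have h2 : 0 ≤ ‖z‖ ^ 2 - 1 := by nlinarith [norm_nonneg z]
  exact le_of_sq_le_sq (by nlinarith [mul_nonneg h1.le h2]) (norm_nonneg _)

lemma norm_sub_eq {a z : ℂ} (hz : ‖z‖ = 1) :
    ‖a - z‖ = ‖1 - (starRingEnd ℂ) a * z‖ := by
  have h := normSq_one_sub_conj_mul a z
  rw [hz] at h
  exact (pow_left_inj₀ (norm_nonneg _) (norm_nonneg _) two_ne_zero).mp (by linarith)

lemma norm_blaschke_eq_one {n : ℕ} {a : Fin n → ℂ} (ha : ∀ j, a j ∈ uDisk) {z : ℂ}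
    (hz : ‖z‖ = 1) : ‖blaschke a z‖ = 1 := by
  rw [blaschke, norm_prod]
  refine Finset.prod_eq_one fun j _ => ?_
  rw [norm_div, norm_sub_eq hz, div_self]
  exact norm_ne_zero_iff.mpr (one_sub_conj_mul_ne_zero (mem_uDisk.mp (ha j)) hz.le)

lemma norm_blaschke_lt_one {n : ℕ} (hn : 2 ≤ n) {a : Fin n → ℂ} (ha : ∀ j, a j ∈ uDisk) {z : ℂ}
    (hz : ‖z‖ < 1) : ‖blaschke a z‖ < 1 := by
  have hj : ∀ j, ‖(a j - z) / (1 - (starRingEnd ℂ) (a j) * z)‖ < 1 := fun j => by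
    rw [norm_div, div_lt_one (norm_pos_iff.mpr
      (one_sub_conj_mul_ne_zero (mem_uDisk.mp (ha j)) hz.le))]
    exact norm_sub_lt (mem_uDisk.mp (ha j)) hz
  rw [blaschke, norm_prod]
  have : NeZero n := ⟨by omega⟩
  rw [← Finset.mul_prod_erase Finset.univ _ (Finset.mem_univ (0 : Fin n))]
  refine mul_lt_one_of_nonneg_of_lt_one_left (norm_nonneg _) (hj _) ?_
  exact Finset.prod_le_one (fun j _ => norm_nonneg _) fun j _ => (hj j).le

lemma differentiableAt_blaschke {n : ℕ} {a : Fin n → ℂ} (ha : ∀ j, a j ∈ uDisk) {z : ℂ}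
    (hz : ‖z‖ ≤ 1) : DifferentiableAt ℂ (blaschke a) z := by
  rw [show blaschke a = fun z => (numP a).eval z / (denQ a).eval z from
    funext (blaschke_eq a)]
  exact (numP a).differentiableAt.div (denQ a).differentiableAt (denQ_ne_zero ha hz)

lemma numP_eq {n : ℕ} (a : Fin n → ℂ) : numP a = C ((-1) ^ n) * ∏ j, (X - C (a j)) := by
  have : ∀ j, C (a j) - X = C (-1) * (X - C (a j)) := fun j => by simp
  rw [numP, Finset.prod_congr rfl fun j _ => this j, Finset.prod_mul_distrib]
  simp

lemma natDegree_numP {n : ℕ} (a : Fin n → ℂ) : (numP a).natDegree = n := by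
  rw [numP_eq, natDegree_C_mul (by simp), natDegree_finsetProd_X_sub_C_eq_card]
  simp

lemma leadingCoeff_numP {n : ℕ} (a : Fin n → ℂ) : (numP a).leadingCoeff = (-1) ^ n := by
  rw [numP_eq, leadingCoeff_mul, (monic_prod_X_sub_C a Finset.univ).leadingCoeff]
  simp

/-- As some `a_j` is `0`, the denominator has degree less than `n`, so the leading coefficient of the
fiber polynomial does not depend on `z`. -/
lemma natDegree_denQ_lt {n : ℕ} {a : Fin n → ℂ} (ha0 : ∃ j, a j = 0) :
    (denQ a).natDegree < n := by
  obtain ⟨j₀, hj₀⟩ := ha0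
  have hle : ∀ j ∈ Finset.univ, (1 - C ((starRingEnd ℂ) (a j)) * X : ℂ[X]).natDegree ≤ 1 :=
    fun j _ => by compute_degree
  calc (denQ a).natDegree ≤ ∑ j, (1 - C ((starRingEnd ℂ) (a j)) * X : ℂ[X]).natDegree :=
        natDegree_prod_le _ _
    _ < ∑ j : Fin n, 1 := Finset.sum_lt_sum hle ⟨j₀, Finset.mem_univ _, by simp [hj₀]⟩
    _ = n := by simp

lemma degree_den_lt {n : ℕ} {a : Fin n → ℂ} (ha0 : ∃ j, a j = 0) (b : ℂ) :
    (C b * denQ a).degree < (numP a).degree := by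
  refine degree_lt_degree ?_
  rw [natDegree_numP]
  exact (natDegree_C_mul_le _ _).trans_lt (natDegree_denQ_lt ha0)

lemma natDegree_fiberPoly {n : ℕ} {a : Fin n → ℂ} (ha0 : ∃ j, a j = 0)
    (z : ℂ) : (fiberPoly a z).natDegree = n := by
  rw [fiberPoly, natDegree_sub_eq_left_of_natDegree_lt, natDegree_numP]
  rw [natDegree_numP]
  exact (natDegree_C_mul_le _ _).trans_lt (natDegree_denQ_lt ha0)

lemma leadingCoeff_fiberPoly {n : ℕ} {a : Fin n → ℂ} (ha0 : ∃ j, a j = 0)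
    (z : ℂ) : (fiberPoly a z).leadingCoeff = (-1) ^ n := by
  rw [fiberPoly, leadingCoeff_sub_of_degree_lt (degree_den_lt ha0 _), leadingCoeff_numP]

lemma fiberPoly_ne_zero {n : ℕ} {a : Fin n → ℂ} (ha0 : ∃ j, a j = 0)
    (z : ℂ) : fiberPoly a z ≠ 0 := by
  rw [← leadingCoeff_ne_zero, leadingCoeff_fiberPoly ha0]
  simp

lemma isRoot_fiberPoly {n : ℕ} {a : Fin n → ℂ} (ha : ∀ j, a j ∈ uDisk) {z : ℂ}
    (hz : ‖z‖ ≤ 1) : (fiberPoly a z).IsRoot z := by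
  have := denQ_ne_zero ha hz
  simp [fiberPoly, IsRoot.def, blaschke_eq, this]

lemma fiberPoly_eq_mul {n : ℕ} {a : Fin n → ℂ} (ha : ∀ j, a j ∈ uDisk) {z : ℂ}
    (hz : ‖z‖ ≤ 1) : (X - C z) * redPoly a z = fiberPoly a z :=
  mul_divByMonic_eq_iff_isRoot.mpr (isRoot_fiberPoly ha hz)

lemma roots_redPoly {n : ℕ} {a : Fin n → ℂ} (ha : ∀ j, a j ∈ uDisk)
    (ha0 : ∃ j, a j = 0) {z : ℂ} (hz : ‖z‖ ≤ 1) :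
    (redPoly a z).roots = (fiberMS a z).erase z := by
  have h : fiberMS a z = (fiberPoly a z).roots := rfl
  have h0 := fiberPoly_ne_zero ha0 z
  rw [← fiberPoly_eq_mul ha hz] at h0
  rw [h, ← fiberPoly_eq_mul ha hz, roots_mul h0, roots_X_sub_C]
  simp

lemma natDegree_redPoly {n : ℕ} {a : Fin n → ℂ} (ha0 : ∃ j, a j = 0)
    (z : ℂ) : (redPoly a z).natDegree = n - 1 := by
  rw [redPoly, natDegree_divByMonic _ (monic_X_sub_C z), natDegree_X_sub_C,
    natDegree_fiberPoly ha0]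

lemma leadingCoeff_redPoly {n : ℕ} {a : Fin n → ℂ} (ha : ∀ j, a j ∈ uDisk)
    (ha0 : ∃ j, a j = 0) {z : ℂ} (hz : ‖z‖ ≤ 1) :
    (redPoly a z).leadingCoeff = (-1) ^ n := by
  rw [← leadingCoeff_fiberPoly ha0 z, ← fiberPoly_eq_mul ha hz, leadingCoeff_mul]
  simp

lemma card_roots_redPoly {n : ℕ} {a : Fin n → ℂ} (ha0 : ∃ j, a j = 0)
    (z : ℂ) : (redPoly a z).roots.card = n - 1 := by
  rw [← natDegree_redPoly ha0 z]
  exact (IsAlgClosed.splits (redPoly a z)).natDegree_eq_card_roots.symm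

/-- All points of the fiber through a point of the disk lie in the disk, and `B` takes the same
value at each of them. -/
lemma mem_roots_redPoly {n : ℕ} (hn : 2 ≤ n) {a : Fin n → ℂ} (ha : ∀ j, a j ∈ uDisk)
    {z w : ℂ} (hz : ‖z‖ < 1) (hw : w ∈ (redPoly a z).roots) :
    ‖w‖ < 1 ∧ blaschke a w = blaschke a z := by
  have hroot : (fiberPoly a z).eval w = 0 := by
    rw [← fiberPoly_eq_mul ha hz.le, eval_mul, (isRoot_of_mem_roots hw).eq_zero, mul_zero]
  have heq : (numP a).eval w = blaschke a z * (denQ a).eval w := by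
    simpa [fiberPoly, sub_eq_zero] using hroot
  have hw1 : ‖w‖ < 1 := by
    by_contra! hge
    have h1 : ‖(denQ a).eval w‖ ≤ ‖(numP a).eval w‖ := by
      rw [eval_denQ, eval_numP, norm_prod, norm_prod]
      exact Finset.prod_le_prod (fun j _ => norm_nonneg _)
        fun j _ => norm_le_sub (mem_uDisk.mp (ha j)) hge
    have h2 : 0 < ‖(numP a).eval w‖ := by
      rw [norm_pos_iff, eval_numP]
      refine Finset.prod_ne_zero_iff.mpr fun j _ h => ?_
      have := mem_uDisk.mp (ha j)
      rw [sub_eq_zero.mp h] at this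
      linarith
    have h3 : ‖(numP a).eval w‖ = ‖blaschke a z‖ * ‖(denQ a).eval w‖ := by
      rw [heq, norm_mul]
    have h4 := norm_blaschke_lt_one hn ha hz
    nlinarith [norm_nonneg (blaschke a z)]
  refine ⟨hw1, ?_⟩
  rw [blaschke_eq a w, heq, mul_div_assoc, div_self (denQ_ne_zero ha hw1.le), mul_one]

lemma calD_eq {n : ℕ} {a : Fin n → ℂ} (ha : ∀ j, a j ∈ uDisk)
    (ha0 : ∃ j, a j = 0) (f : ℂ → ℂ) {z : ℂ} (hz : ‖z‖ ≤ 1) :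
    calD a f z = ((redPoly a z).roots.map fun w => f z - f w).prod := by
  rw [roots_redPoly ha ha0 hz]
  rfl

/-- `𝒟(z) = (-1)^n (P'(z) - B(z) Q'(z))`: up to sign, the derivative at `z` of the fiber
polynomial. -/
lemma calD_id_eq {n : ℕ} {a : Fin n → ℂ} (ha : ∀ j, a j ∈ uDisk)
    (ha0 : ∃ j, a j = 0) {z : ℂ} (hz : ‖z‖ ≤ 1) :
    calD a id z = (-1) ^ n *
      ((derivative (numP a)).eval z - blaschke a z * (derivative (denQ a)).eval z) := by
  have h1 : (redPoly a z).eval z = (-1) ^ n * calD a id z := by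
    rw [calD_eq ha ha0 id hz]
    conv_lhs => rw [(IsAlgClosed.splits (redPoly a z)).eq_prod_roots,
      leadingCoeff_redPoly ha ha0 hz]
    simp [eval_multiset_prod, Multiset.map_map]
  have h2 : (redPoly a z).eval z =
      (derivative (numP a)).eval z - blaschke a z * (derivative (denQ a)).eval z := by
    have := congrArg (eval z)
      (divByMonic_add_X_sub_C_mul_derivative_divByMonic_eq_derivative (fiberPoly a z) z)
    simpa [redPoly, fiberPoly] using this
  rw [← h2, h1, ← mul_assoc, ← mul_pow]
  simp

/-! ### Holomorphic dependence on `z` for polynomials -/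

lemma differentiableOn_coeff_redPoly {n : ℕ} {a : Fin n → ℂ}
    (ha : ∀ j, a j ∈ uDisk) (ha0 : ∃ j, a j = 0) (i : ℕ) :
    DifferentiableOn ℂ (fun z => (redPoly a z).coeff i) uDisk := by
  simp only [redPoly, coeff_divByMonic_X_sub_C, natDegree_fiberPoly ha0]
  refine DifferentiableOn.fun_sum fun k _ => ?_
  refine DifferentiableOn.mul (by fun_prop) ?_
  simp only [fiberPoly, coeff_sub, coeff_C_mul]
  intro z hz
  have := differentiableAt_blaschke ha (mem_uDisk.mp hz).le
  exact DifferentiableAt.differentiableWithinAt (by fun_prop)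

lemma differentiable_coeff_divByMonic (h : ℂ[X]) (i : ℕ) :
    Differentiable ℂ (fun z => (h /ₘ (X - C z)).coeff i) := by
  simp only [coeff_divByMonic_X_sub_C]
  fun_prop

/-- For polynomial `h`, the product of the divided differences of `h` over the reduced fiber is
a resultant, hence a polynomial expression in holomorphic functions of `z`. -/
lemma differentiableOn_prod_divByMonic {n : ℕ} {a : Fin n → ℂ}
    (ha : ∀ j, a j ∈ uDisk) (ha0 : ∃ j, a j = 0) (h : ℂ[X]) :
    DifferentiableOn ℂ
      (fun z => ((redPoly a z).roots.map fun w => (h /ₘ (X - C z)).eval w).prod) uDisk := by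
  set d := h.natDegree with hd
  have hres : DifferentiableOn ℂ
      (fun z => (redPoly a z).resultant (h /ₘ (X - C z)) (n - 1) d) uDisk := by
    simp only [resultant, Matrix.det_apply']
    refine DifferentiableOn.fun_sum fun σ _ => ?_
    refine DifferentiableOn.mul (by fun_prop) ?_
    refine DifferentiableOn.fun_finsetProd fun i _ => ?_
    generalize σ i = k
    induction i using Fin.addCases with
    | left i =>
      simp only [sylvester, Matrix.of_apply, Fin.addCases_left]
      split_ifs
      · exact (differentiable_coeff_divByMonic h _).differentiableOn
      · fun_prop
    | right i =>
      simp only [sylvester, Matrix.of_apply, Fin.addCases_right]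
      split_ifs
      · exact differentiableOn_coeff_redPoly ha ha0 _
      · fun_prop
  refine (hres.const_mul (((-1) ^ n) ^ d)).congr fun z hz => ?_
  have hdeg : (h /ₘ (X - C z)).natDegree ≤ d := by
    rw [natDegree_divByMonic _ (monic_X_sub_C z)]
    omega
  have := resultant_eq_prod_eval (redPoly a z) (h /ₘ (X - C z)) d hdeg
    (IsAlgClosed.splits _)
  rw [natDegree_redPoly ha0, leadingCoeff_redPoly ha ha0 (mem_uDisk.mp hz).le] at this
  rw [this, ← mul_assoc, ← mul_pow, ← mul_pow]
  simp

/-! ### Divided differences -/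

lemma eval_divByMonic_eq_dslope (h : ℂ[X]) (z w : ℂ) :
    (h /ₘ (X - C z)).eval w = dslope (fun x => h.eval x) z w := by
  by_cases hwz : w = z
  · subst hwz
    have := congrArg (eval w)
      (divByMonic_add_X_sub_C_mul_derivative_divByMonic_eq_derivative h w)
    simpa [dslope_same] using this
  · have := congrArg (eval w) (X_sub_C_mul_divByMonic_eq_sub_modByMonic h z)
    rw [modByMonic_X_sub_C_eq_C_eval] at this
    simp only [eval_mul, eval_sub, eval_X, eval_C] at this
    rw [dslope_of_ne _ hwz, slope_def_field, eq_div_iff (sub_ne_zero.mpr hwz), mul_comm, this]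

lemma norm_dslope_le {g : ℂ → ℂ} {s : Set ℂ} (hs : Convex ℝ s) {ε : ℝ}
    (hg : ∀ x ∈ s, DifferentiableAt ℂ g x) (hb : ∀ x ∈ s, ‖deriv g x‖ ≤ ε) {z w : ℂ}
    (hz : z ∈ s) (hw : w ∈ s) : ‖dslope g z w‖ ≤ ε := by
  by_cases hwz : w = z
  · subst hwz
    simpa [dslope_same] using hb w hw
  · rw [dslope_of_ne _ hwz, slope_def_field, norm_div,
      div_le_iff₀ (norm_pos_iff.mpr (sub_ne_zero.mpr hwz))]
    exact hs.norm_image_sub_le_of_norm_deriv_le hg hb hz hw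

lemma dslope_sub_apply {f g : ℂ → ℂ} {z : ℂ} (hf : DifferentiableAt ℂ f z)
    (hg : DifferentiableAt ℂ g z) (w : ℂ) :
    dslope (fun x => f x - g x) z w = dslope f z w - dslope g z w := by
  by_cases hwz : w = z
  · subst hwz
    simp only [dslope_same]
    exact deriv_fun_sub hf hg
  · simp only [dslope_of_ne _ hwz, slope_def_field]
    ring

/-- Taylor polynomials approximate `f'` uniformly on smaller closed disks, through their
derivatives. -/
lemma exists_poly_approx {f : ℂ → ℂ} (hf : DifferentiableOn ℂ f uDisk) {ρ : ℝ} (hρ0 : 0 < ρ)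
    (hρ1 : ρ < 1) : ∃ h : ℕ → ℂ[X],
      TendstoUniformlyOn (fun k => deriv fun x => (h k).eval x) (deriv f) atTop
        (closedBall 0 ρ) := by
  obtain ⟨R, hR, hR1⟩ := exists_between hρ1
  lift R to NNReal using (hρ0.trans hR).le
  have hR0 : 0 < R := by exact_mod_cast hρ0.trans hR
  have hp := (hf.mono (closedBall_subset_ball hR1) :
    DifferentiableOn ℂ f (closedBall 0 R)).hasFPowerSeriesOnBall hR0
  set p := cauchyPowerSeries f 0 R
  refine ⟨fun k => ∑ i ∈ Finset.range k, C (p.coeff i) * X ^ i, ?_⟩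
  have h1 := hp.tendstoLocallyUniformlyOn'
  have hball : Metric.eball (0 : ℂ) R = ball 0 R := Metric.eball_coe
  rw [hball] at h1
  have h2 : (fun k y => p.partialSum k (y - 0)) =
      fun k x => (∑ i ∈ Finset.range k, C (p.coeff i) * X ^ i : ℂ[X]).eval x := by
    funext k x
    rw [FormalMultilinearSeries.partialSum, eval_finsetSum, sub_zero]
    refine Finset.sum_congr rfl fun i _ => ?_
    rw [FormalMultilinearSeries.apply_eq_pow_smul_coeff, smul_eq_mul, mul_comm, eval_mul, eval_C,
      eval_pow, eval_X]
  rw [h2] at h1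
  have h3 := h1.deriv (Eventually.of_forall fun k => (Polynomial.differentiable _).differentiableOn)
    isOpen_ball
  exact (tendstoLocallyUniformlyOn_iff_forall_isCompact isOpen_ball).mp h3 _
    (closedBall_subset_ball hR) (isCompact_closedBall _ _)

/-- Quantitative continuity of finite products; the bound on the product itself is carried along
for the induction. -/
lemma norm_prod_map_sub_le {s : Multiset ℂ} {u v : ℂ → ℂ} {M δ : ℝ} (hM : 1 ≤ M)
    (hu : ∀ w ∈ s, ‖u w‖ ≤ M) (hv : ∀ w ∈ s, ‖v w‖ ≤ M) (huv : ∀ w ∈ s, ‖u w - v w‖ ≤ δ) :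
    ‖(s.map u).prod‖ ≤ M ^ s.card ∧
      ‖(s.map u).prod - (s.map v).prod‖ ≤ s.card * M ^ s.card * δ := by
  induction s using Multiset.induction_on with
  | empty => simp
  | cons w s ih =>
    obtain ⟨ih1, ih2⟩ := ih (fun x hx => hu x (Multiset.mem_cons_of_mem hx))
      (fun x hx => hv x (Multiset.mem_cons_of_mem hx))
      (fun x hx => huv x (Multiset.mem_cons_of_mem hx))
    have hu' := hu w (Multiset.mem_cons_self _ _)
    have hv' := hv w (Multiset.mem_cons_self _ _)
    have huv' := huv w (Multiset.mem_cons_self _ _)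
    simp only [Multiset.map_cons, Multiset.prod_cons, Multiset.card_cons]
    set U := (s.map u).prod
    set V := (s.map v).prod
    have hδ : 0 ≤ δ := (norm_nonneg _).trans huv'
    have hMk : 0 ≤ M ^ s.card := by positivity
    constructor
    · rw [norm_mul, pow_succ']
      gcongr
    · calc ‖u w * U - v w * V‖ = ‖(u w - v w) * U + v w * (U - V)‖ := by ring_nf
        _ ≤ ‖u w - v w‖ * ‖U‖ + ‖v w‖ * ‖U - V‖ := by
          refine (norm_add_le _ _).trans ?_
          rw [norm_mul, norm_mul]
        _ ≤ δ * M ^ s.card + M * (s.card * M ^ s.card * δ) := by gcongr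
        _ ≤ M * (δ * M ^ s.card) + M * (s.card * M ^ s.card * δ) := by
          have := le_mul_of_one_le_left (mul_nonneg hδ hMk) hM
          linarith
        _ = ((s.card + 1 : ℕ) : ℝ) * M ^ (s.card + 1) * δ := by
          push_cast
          ring

/-! ### Behaviour near the unit circle -/

/-- A function exceeding `c` on the unit circle has its sublevel set `{g ≤ c}` inside a smaller
closed disk. -/
lemma exists_radius {g : ℂ → ℝ} (hg : ContinuousOn g (closedBall 0 1)) {c : ℝ}
    (hc : ∀ z, ‖z‖ = 1 → c < g z) :
    ∃ ρ, 0 < ρ ∧ ρ < 1 ∧ ∀ z, ‖z‖ ≤ 1 → g z ≤ c → ‖z‖ ≤ ρ := by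
  set K := closedBall (0 : ℂ) 1 ∩ g ⁻¹' Iic c
  have hK : IsCompact K := (isCompact_closedBall (0 : ℂ) 1).of_isClosed_subset
    (hg.preimage_isClosed_of_isClosed isClosed_closedBall isClosed_Iic) inter_subset_left
  rcases K.eq_empty_or_nonempty with he | hne
  · refine ⟨1 / 2, by norm_num, by norm_num, fun z hz hgz => ?_⟩
    have : z ∈ K := ⟨by simpa using hz, hgz⟩
    simp [he] at this
  · obtain ⟨x, ⟨hx1, hx2⟩, hmax⟩ := hK.exists_isMaxOn hne continuous_norm.continuousOn
    have hx : ‖x‖ < 1 := lt_of_le_of_ne (by simpa using hx1) fun h =>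
      absurd (hc x h) (not_lt.mpr hx2)
    refine ⟨max (1 / 2) ‖x‖, by positivity, max_lt (by norm_num) hx, fun z hz hgz => ?_⟩
    exact le_max_of_le_right (hmax (show z ∈ K from ⟨by simpa using hz, hgz⟩))

/-- On the unit circle, `z` times the logarithmic derivative of a Blaschke factor has positive
real part. -/
lemma re_logDeriv_factor_pos {a z : ℂ} (ha : ‖a‖ < 1) (hz : ‖z‖ = 1) :
    0 < (z * (-1 / (a - z) - -(starRingEnd ℂ) a / (1 - (starRingEnd ℂ) a * z))).re := by
  set c := 1 - (starRingEnd ℂ) a * z with hc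
  have hc0 : c ≠ 0 := one_sub_conj_mul_ne_zero ha hz.le
  have hcc0 : (starRingEnd ℂ) c ≠ 0 := by simpa using hc0
  have hz0 : z ≠ 0 := by
    intro h
    simp [h] at hz
  have hzz : z * (starRingEnd ℂ) z = 1 := by
    rw [Complex.mul_conj, Complex.normSq_eq_norm_sq, hz]
    simp
  have haz : a - z = -(z * (starRingEnd ℂ) c) := by
    simp only [hc, map_sub, map_one, map_mul, Complex.conj_conj]
    linear_combination (-a) * hzz
  have hrew : z * (-1 / (a - z) - -(starRingEnd ℂ) a / c) = (starRingEnd ℂ) c⁻¹ + c⁻¹ - 1 := by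
    rw [haz, map_inv₀]
    have : (starRingEnd ℂ) a * z = 1 - c := by rw [hc]; ring
    field_simp
    linear_combination ((starRingEnd ℂ) c) * this
  have hre : ((starRingEnd ℂ) c⁻¹ + c⁻¹ - 1).re = (2 * c.re - normSq c) / normSq c := by
    have : normSq c ≠ 0 := by simpa using hc0
    simp only [sub_re, add_re, conj_re, inv_re, one_re]
    field_simp
    ring
  rw [hrew, hre]
  refine div_pos ?_ (normSq_pos.mpr hc0)
  have h1 : normSq (1 - c) = ‖a‖ ^ 2 := by
    rw [Complex.normSq_eq_norm_sq, hc]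
    simp [hz]
  have h2 : normSq (1 - c) = 1 - (2 * c.re - normSq c) := by
    simp only [normSq_apply, sub_re, sub_im, one_re, one_im]
    ring
  nlinarith [norm_nonneg a]

lemma logDeriv_poly (p : ℂ[X]) (z : ℂ) :
    logDeriv (fun x => p.eval x) z = (derivative p).eval z / p.eval z := by
  rw [logDeriv_apply, Polynomial.deriv]

/-- `B'` has no zero on the unit circle; here in terms of `P' - B Q' = Q B'`. -/
lemma derivative_ne_zero_of_norm_eq_one {n : ℕ} (hn : 2 ≤ n) {a : Fin n → ℂ}
    (ha : ∀ j, a j ∈ uDisk) {z : ℂ} (hz : ‖z‖ = 1) :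
    (derivative (numP a)).eval z - blaschke a z * (derivative (denQ a)).eval z ≠ 0 := by
  intro h0
  have hQf : ∀ j, 1 - (starRingEnd ℂ) (a j) * z ≠ 0 := fun j =>
    one_sub_conj_mul_ne_zero (mem_uDisk.mp (ha j)) hz.le
  have hPf : ∀ j, a j - z ≠ 0 := fun j => by
    rw [← norm_ne_zero_iff, norm_sub_eq hz]
    exact norm_ne_zero_iff.mpr (hQf j)
  have hQ := denQ_ne_zero ha hz.le
  have hP : (numP a).eval z ≠ 0 := by
    rw [eval_numP]
    exact Finset.prod_ne_zero_iff.mpr fun j _ => hPf j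
  have hlogP : (derivative (numP a)).eval z / (numP a).eval z = ∑ j, -1 / (a j - z) := by
    rw [← logDeriv_poly]
    simp only [eval_numP]
    rw [logDeriv_prod]
    · refine Finset.sum_congr rfl fun j _ => ?_
      simp [logDeriv_apply]
    · exact fun j _ => hPf j
    · exact fun j _ => by fun_prop
  have hlogQ : (derivative (denQ a)).eval z / (denQ a).eval z =
      ∑ j, -(starRingEnd ℂ) (a j) / (1 - (starRingEnd ℂ) (a j) * z) := by
    rw [← logDeriv_poly]
    simp only [eval_denQ]
    rw [logDeriv_prod]
    · refine Finset.sum_congr rfl fun j _ => ?_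
      simp [logDeriv_apply]
    · exact fun j _ => hQf j
    · exact fun j _ => by fun_prop
  have hzero : (derivative (numP a)).eval z / (numP a).eval z -
      (derivative (denQ a)).eval z / (denQ a).eval z = 0 := by
    rw [blaschke_eq] at h0
    field_simp at h0 ⊢
    linear_combination h0
  have hsum : (∑ j, z * (-1 / (a j - z) -
      -(starRingEnd ℂ) (a j) / (1 - (starRingEnd ℂ) (a j) * z))).re = 0 := by
    rw [← Finset.mul_sum, Finset.sum_sub_distrib, ← hlogP, ← hlogQ, hzero]
    simp
  rw [Complex.re_sum] at hsum
  have : NeZero n := ⟨by omega⟩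
  have : 0 < ∑ j, (z * (-1 / (a j - z) -
      -(starRingEnd ℂ) (a j) / (1 - (starRingEnd ℂ) (a j) * z))).re :=
    Finset.sum_pos (fun j _ => re_logDeriv_factor_pos (mem_uDisk.mp (ha j)) hz)
      ⟨0, Finset.mem_univ _⟩
  linarith

/-! ### The quotient `Γ(f)` -/

/-- `Γ(f)` as the product of the divided differences `(f(z) - f(w)) / (z - w)` over the reduced
fiber, with the value `f'(z)` when `w = z`. -/
def gammaFn {n : ℕ} (a : Fin n → ℂ) (f : ℂ → ℂ) (z : ℂ) : ℂ :=
  ((redPoly a z).roots.map fun w => dslope f z w).prod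

lemma gammaFn_mul {n : ℕ} {a : Fin n → ℂ} (ha : ∀ j, a j ∈ uDisk)
    (ha0 : ∃ j, a j = 0) (f : ℂ → ℂ) {z : ℂ} (hz : ‖z‖ ≤ 1) :
    gammaFn a f z * calD a id z = calD a f z := by
  rw [calD_eq ha ha0 f hz, calD_eq ha ha0 id hz, gammaFn, ← Multiset.prod_map_mul]
  congr 1
  refine Multiset.map_congr rfl fun w _ => ?_
  have := sub_smul_dslope f z w
  rw [smul_eq_mul] at this
  simp only [id]
  linear_combination -this

/-- The fibers through a smaller closed disk stay in a fixed smaller closed disk. -/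
lemma exists_radius_fiber {n : ℕ} (hn : 2 ≤ n) {a : Fin n → ℂ} (ha : ∀ j, a j ∈ uDisk)
    {r : ℝ} (hr0 : 0 < r) (hr1 : r < 1) :
    ∃ ρ, 0 < ρ ∧ ρ < 1 ∧ ∀ z, ‖z‖ ≤ r → ‖z‖ ≤ ρ ∧ ∀ w ∈ (redPoly a z).roots, ‖w‖ ≤ ρ := by
  have hcont : ContinuousOn (fun z => ‖blaschke a z‖) (closedBall 0 1) := fun z hz =>
    (differentiableAt_blaschke ha (by simpa using hz)).continuousAt.norm.continuousWithinAt
  obtain ⟨x, hx, hmax⟩ := (isCompact_closedBall (0 : ℂ) r).exists_isMaxOn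
    ⟨0, by simpa using hr0.le⟩ (hcont.mono (closedBall_subset_closedBall hr1.le))
  have hx1 : ‖x‖ < 1 := lt_of_le_of_lt (by simpa using hx) hr1
  obtain ⟨ρ, h0, h1, hρ⟩ := exists_radius hcont (c := ‖blaschke a x‖) fun z hz => by
    rw [norm_blaschke_eq_one ha hz]
    exact norm_blaschke_lt_one hn ha hx1
  refine ⟨ρ, h0, h1, fun z hz => ?_⟩
  have hz1 : ‖z‖ < 1 := lt_of_le_of_lt hz hr1
  have hBz : ‖blaschke a z‖ ≤ ‖blaschke a x‖ :=
    hmax (show z ∈ closedBall (0 : ℂ) r by simpa using hz)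
  refine ⟨hρ z hz1.le hBz, fun w hw => ?_⟩
  obtain ⟨hw1, hBw⟩ := mem_roots_redPoly hn ha hz1 hw
  exact hρ w hw1.le (by rwa [hBw])

/-- `Γ(f)` is a locally uniform limit of the functions `Γ(h_k)` for polynomials `h_k`, which are
holomorphic because they are resultants. -/
lemma differentiableOn_gammaFn {n : ℕ} (hn : 2 ≤ n) {a : Fin n → ℂ} (ha : ∀ j, a j ∈ uDisk)
    (ha0 : ∃ j, a j = 0) {f : ℂ → ℂ} (hf : DifferentiableOn ℂ f uDisk) :
    DifferentiableOn ℂ (gammaFn a f) uDisk := by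
  intro z₀ hz₀
  obtain ⟨r, hr, hr1⟩ := exists_between (mem_uDisk.mp hz₀)
  have hr0 : 0 < r := (norm_nonneg _).trans_lt hr
  obtain ⟨ρ, hρ0, hρ1, hfib⟩ := exists_radius_fiber hn ha hr0 hr1
  obtain ⟨h, hh⟩ := exists_poly_approx hf hρ0 hρ1
  have hsub : closedBall (0 : ℂ) ρ ⊆ uDisk := closedBall_subset_ball hρ1
  have hfd : ∀ x ∈ closedBall (0 : ℂ) ρ, DifferentiableAt ℂ f x := fun x hx =>
    hf.differentiableAt (isOpen_ball.mem_nhds (hsub hx))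
  obtain ⟨M₀, hM₀⟩ := (isCompact_closedBall (0 : ℂ) ρ).exists_bound_of_continuousOn
    ((hf.deriv isOpen_ball).continuousOn.mono hsub)
  have hM₀0 : 0 ≤ M₀ := (norm_nonneg _).trans (hM₀ 0 (by simpa using hρ0.le))
  have hunif : TendstoUniformlyOn
      (fun k z => ((redPoly a z).roots.map fun w => (h k /ₘ (X - C z)).eval w).prod)
      (gammaFn a f) atTop (ball 0 r) := by
    rw [Metric.tendstoUniformlyOn_iff]
    intro ε hε
    set L : ℝ := (n - 1 : ℕ) * (M₀ + 1) ^ (n - 1) with hL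
    have hL0 : 0 ≤ L := by positivity
    set δ : ℝ := min 1 (ε / (L + 1)) with hδ
    have hδ0 : 0 < δ := lt_min one_pos (by positivity)
    filter_upwards [Metric.tendstoUniformlyOn_iff.mp hh δ hδ0] with k hk z hz
    have hzr : ‖z‖ ≤ r := by simpa using (mem_ball.mp hz).le
    obtain ⟨hzρ, hwρ⟩ := hfib z hzr
    have hzB : z ∈ closedBall (0 : ℂ) ρ := by simpa using hzρ
    have hu : ∀ w ∈ (redPoly a z).roots, ‖dslope f z w‖ ≤ M₀ := fun w hw =>
      norm_dslope_le (convex_closedBall 0 ρ) hfd hM₀ hzB (by simpa using hwρ w hw)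
    have huv : ∀ w ∈ (redPoly a z).roots,
        ‖dslope f z w - (h k /ₘ (X - C z)).eval w‖ ≤ δ := fun w hw => by
      rw [eval_divByMonic_eq_dslope,
        ← dslope_sub_apply (hfd z hzB) (Polynomial.differentiableAt _)]
      refine norm_dslope_le (convex_closedBall 0 ρ)
        (fun x hx => (hfd x hx).sub (Polynomial.differentiableAt _)) (fun x hx => ?_) hzB
        (by simpa using hwρ w hw)
      rw [deriv_sub (hfd x hx) (Polynomial.differentiableAt _), ← dist_eq_norm]
      exact (hk x hx).le
    have hv : ∀ w ∈ (redPoly a z).roots, ‖(h k /ₘ (X - C z)).eval w‖ ≤ M₀ + 1 := fun w hw => by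
      have h1 := norm_sub_le (dslope f z w) (dslope f z w - (h k /ₘ (X - C z)).eval w)
      rw [sub_sub_cancel] at h1
      linarith [hu w hw, huv w hw, min_le_left 1 (ε / (L + 1))]
    have hmain := (norm_prod_map_sub_le (by linarith)
      (fun w hw => (hu w hw).trans (by linarith)) hv huv).2
    rw [card_roots_redPoly ha0, ← hL] at hmain
    rw [dist_eq_norm]
    refine hmain.trans_lt ?_
    calc L * δ ≤ L * (ε / (L + 1)) := by
          gcongr
          exact min_le_right _ _
      _ < ε := by
          rw [mul_div_assoc', div_lt_iff₀ (by positivity)]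
          nlinarith
  have hdiff : DifferentiableOn ℂ (gammaFn a f) (ball 0 r) :=
    hunif.tendstoLocallyUniformlyOn.differentiableOn
      (Eventually.of_forall fun k => (differentiableOn_prod_divByMonic ha ha0 (h k)).mono
        (ball_subset_ball hr1.le)) isOpen_ball
  exact (hdiff.differentiableAt
    (isOpen_ball.mem_nhds (by simpa using hr))).differentiableWithinAt

lemma differentiableOn_calD_id {n : ℕ} {a : Fin n → ℂ} (ha : ∀ j, a j ∈ uDisk)
    (ha0 : ∃ j, a j = 0) : DifferentiableOn ℂ (calD a id) uDisk := by
  have : DifferentiableOn ℂ (fun z => (-1) ^ n *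
      ((derivative (numP a)).eval z - blaschke a z * (derivative (denQ a)).eval z)) uDisk := by
    intro z hz
    have := differentiableAt_blaschke ha (mem_uDisk.mp hz).le
    exact DifferentiableAt.differentiableWithinAt (by fun_prop)
  exact this.congr fun z hz => calD_id_eq ha ha0 (mem_uDisk.mp hz).le

/-- Off a smaller closed disk, `|𝒟|` is bounded below. -/
lemma exists_lower_bound_calD_id {n : ℕ} (hn : 2 ≤ n) {a : Fin n → ℂ} (ha : ∀ j, a j ∈ uDisk)
    (ha0 : ∃ j, a j = 0) :
    ∃ c ρ : ℝ, 0 < c ∧ ρ < 1 ∧ ∀ z ∈ uDisk, ρ < ‖z‖ → c < ‖calD a id z‖ := by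
  set E : ℂ → ℂ := fun z =>
    (derivative (numP a)).eval z - blaschke a z * (derivative (denQ a)).eval z with hE
  have hcont : ContinuousOn (fun z => ‖E z‖) (closedBall 0 1) := by
    intro z hz
    have hB := (differentiableAt_blaschke ha (z := z) (by simpa using hz)).continuousAt
    have hEz : ContinuousAt E z :=
      (Polynomial.continuousAt _).sub (hB.mul (Polynomial.continuousAt _))
    exact hEz.norm.continuousWithinAt
  obtain ⟨x, hx, hmin⟩ := (isCompact_sphere (0 : ℂ) 1).exists_isMinOn
    ⟨1, by simp⟩ (hcont.mono sphere_subset_closedBall)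
  have hx1 : ‖x‖ = 1 := by simpa using hx
  have hpos : 0 < ‖E x‖ := norm_pos_iff.mpr (derivative_ne_zero_of_norm_eq_one hn ha hx1)
  obtain ⟨ρ, -, hρ1, hρ⟩ := exists_radius hcont (c := ‖E x‖ / 2) fun z hz => by
    have : ‖E x‖ ≤ ‖E z‖ := hmin (show z ∈ sphere (0 : ℂ) 1 by simpa using hz)
    linarith
  refine ⟨‖E x‖ / 2, ρ, by linarith, hρ1, fun z hz hzρ => ?_⟩
  have hz1 := mem_uDisk.mp hz
  have hEz : ‖calD a id z‖ = ‖E z‖ := by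
    rw [calD_id_eq ha ha0 hz1.le, norm_mul]
    simp [hE]
  rw [hEz]
  by_contra! hle
  exact absurd (hρ z hz1.le hle) (not_le.mpr hzρ)

/-- The base `2C + 1`, rather than `2C`, keeps the bound on each factor at least `1`, as
`norm_prod_map_sub_le` asks. -/
lemma norm_calD_le {n : ℕ} (hn : 2 ≤ n) {a : Fin n → ℂ} (ha : ∀ j, a j ∈ uDisk)
    (ha0 : ∃ j, a j = 0) {f : ℂ → ℂ} {C : ℝ} (hC : ∀ z ∈ uDisk, ‖f z‖ ≤ C) {z : ℂ}
    (hz : z ∈ uDisk) : ‖calD a f z‖ ≤ (2 * C + 1) ^ (n - 1) := by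
  have hz1 := mem_uDisk.mp hz
  have hC0 : 0 ≤ C := (norm_nonneg _).trans (hC z hz)
  have hb : ∀ w ∈ (redPoly a z).roots, ‖f z - f w‖ ≤ 2 * C + 1 := fun w hw => by
    have := hC w (mem_uDisk.mpr (mem_roots_redPoly hn ha hz1 hw).1)
    linarith [norm_sub_le (f z) (f w), hC z hz]
  rw [calD_eq ha ha0 f hz1.le, ← card_roots_redPoly ha0 z]
  exact (norm_prod_map_sub_le (δ := 0) (by linarith) hb hb (by simp)).1

/-- For `f` holomorphic on the disk: (i) `𝒟(f)` is holomorphic on the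
disk; (ii) the quotient `Γ(f) = 𝒟(f)/𝒟` has only removable singularities, i.e. there is
a holomorphic `G` on the disk with `G·𝒟 = 𝒟(f)`; (iii) if `f` is bounded then any such
`G` is bounded. -/
theorem stmt2 {n : ℕ} (hn : 2 ≤ n) (a : Fin n → ℂ) (ha : ∀ j, a j ∈ uDisk)
    (ha0 : a ⟨0, by omega⟩ = 0)
    (f : ℂ → ℂ) (hf : DifferentiableOn ℂ f uDisk) :
    DifferentiableOn ℂ (calD a f) uDisk ∧
    (∃ G : ℂ → ℂ, DifferentiableOn ℂ G uDisk ∧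
      ∀ z ∈ uDisk, G z * calD a id z = calD a f z) ∧
    ((∃ C : ℝ, ∀ z ∈ uDisk, ‖f z‖ ≤ C) →
      ∀ G : ℂ → ℂ, IsGamma a f G → ∃ C : ℝ, ∀ z ∈ uDisk, ‖G z‖ ≤ C) := by
  replace ha0 : ∃ j, a j = 0 := ⟨_, ha0⟩
  have hΓ := differentiableOn_gammaFn hn ha ha0 hf
  have hmul : ∀ z ∈ uDisk, gammaFn a f z * calD a id z = calD a f z := fun z hz =>
    gammaFn_mul ha ha0 f (mem_uDisk.mp hz).le
  refine ⟨(hΓ.mul (differentiableOn_calD_id ha ha0)).congr fun z hz => (hmul z hz).symm,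
    ⟨gammaFn a f, hΓ, hmul⟩, ?_⟩
  rintro ⟨C, hC⟩ G ⟨hG, hGD⟩
  obtain ⟨c, ρ, hc, hρ1, hlow⟩ := exists_lower_bound_calD_id hn ha ha0
  obtain ⟨M, hM⟩ := (isCompact_closedBall (0 : ℂ) ρ).exists_bound_of_continuousOn
    (hG.continuousOn.mono (closedBall_subset_ball hρ1))
  refine ⟨max M ((2 * C + 1) ^ (n - 1) / c), fun z hz => ?_⟩
  by_cases hzρ : ‖z‖ ≤ ρ
  · exact le_max_of_le_left (hM z (by simpa using hzρ))
  · refine le_max_of_le_right ?_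
    rw [le_div_iff₀ hc]
    calc ‖G z‖ * c ≤ ‖G z‖ * ‖calD a id z‖ := by
          gcongr
          exact (hlow z hz (not_le.mp hzρ)).le
      _ = ‖calD a f z‖ := by rw [← norm_mul, hGD z hz]
      _ ≤ _ := norm_calD_le hn ha ha0 hC hz
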